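/- Let (S,+) be a commutative semigroup, G a 2-cancellative abelian group, σ, τ : S → S two involutions, and fix x₀, z₀ ∈ S. If f : S² → G satisfies f(x+y, z+w) + f(x+σ(y), z+τ(w)) = 2 f(x,z) for all x, y, z, w ∈ S, then the function a : S² → G defined by a(x,z) = f(x,z) − f(x₀+σ(x₀), z₀+τ(z₀)) is additive, i.e. a(x+y, z+w) = a(x,z) + a(y,w) for all x, y, z, w ∈ S, and satisfies a(σ(x), τ(z)) = −a(x,z) for all x, z ∈ S. -/

import Mathlib

theorem jensen_aux {T G : Type*} [AddCommSemigroup T] [AddCommGroup G]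
    (hG : ∀ g h : G, g + g = h + h → g = h)
    (φ : T → T) (hinv : ∀ x, φ (φ x) = x) (hadd : ∀ x y, φ (x + y) = φ x + φ y)
    (p₀ : T) (F : T → G)
    (hF : ∀ p q, F (p + q) + F (p + φ q) = 2 • F p) :
    (∀ p q, F (p + q) - F (p₀ + φ p₀) = (F p - F (p₀ + φ p₀)) + (F q - F (p₀ + φ p₀))) ∧
    (∀ p, F (φ p) - F (p₀ + φ p₀) = - (F p - F (p₀ + φ p₀))) := by
  have h1 : ∀ p r, F (p + (r + φ r)) = F p := by
    intro p r
    apply hG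
    have h := hF p (r + φ r)
    rw [hadd, hinv, add_comm (φ r) r, two_nsmul] at h
    exact h
  have h2 : ∀ p, F p + F (φ p) = 2 • F (p₀ + φ p₀) := by
    intro p
    have h := hF (p₀ + φ p₀) p
    rwa [add_comm _ p, add_comm _ (φ p), h1, h1] at h
  refine ⟨fun p q => ?_, fun p => ?_⟩
  · apply hG
    have e1 := hF p q
    have e2 := hF q p
    have e3 := h2 (p + φ q)
    rw [hadd, hinv, add_comm (φ p) q] at e3
    rw [add_comm q p] at e2
    have e4 : F (p + q) + F (p + q) = 2 • F p + 2 • F q - 2 • F (p₀ + φ p₀) := by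
      rw [← e1, ← e2, ← e3]; abel
    generalize F (p₀ + φ p₀) = c at *
    calc _ = (F (p + q) + F (p + q)) - 2 • c := by abel
      _ = _ := by rw [e4]; abel
  · have h := h2 p
    rw [← eq_sub_iff_add_eq'] at h
    rw [h]; abel

/-- subtracting the constant from a Jensen type solution yields
an additive function that is odd with respect to the involutions. -/
theorem jensen_type_additive_part
    {S G : Type*} [AddCommSemigroup S] [AddCommGroup G]
    (hG : ∀ g h : G, g + g = h + h → g = h)
    (σ τ : S → S)
    (hσinv : ∀ x, σ (σ x) = x) (hσadd : ∀ x y, σ (x + y) = σ x + σ y)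
    (hτinv : ∀ x, τ (τ x) = x) (hτadd : ∀ x y, τ (x + y) = τ x + τ y)
    (x₀ z₀ : S)
    (f : S → S → G)
    (hf : ∀ x y z w, f (x + y) (z + w) + f (x + σ y) (z + τ w) = 2 • f x z)
    (a : S → S → G)
    (hadef : ∀ x z, a x z = f x z - f (x₀ + σ x₀) (z₀ + τ z₀)) :
    (∀ x y z w, a (x + y) (z + w) = a x z + a y w) ∧
    (∀ x z, a (σ x) (τ z) = - a x z) := by
  obtain ⟨h1, h2⟩ := jensen_aux (T := S × S) hG (fun p => (σ p.1, τ p.2))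
    (fun p => by simp [hσinv, hτinv]) (fun p q => by simp [hσadd, hτadd])
    (x₀, z₀) (fun p => f p.1 p.2) (fun p q => hf p.1 q.1 p.2 q.2)
  simp only [hadef]
  exact ⟨fun x y z w => h1 (x, z) (y, w), fun x z => h2 (x, z)⟩
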